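/- Let F_q be a finite field with q elements, q odd and q ≡ 1 (mod 3). Then for every s ∈ F_q there exists t ∈ F_q such that t³ = s³ and t² + t + 1 is a square in F_q. -/

import Mathlib

/-!
Fix a primitive cube root of unity `ρ` and write `a t = t ^ 2 + t + 1`. The elements `s`, `s * ρ`,
`s * ρ ^ 2` all have cube `s ^ 3`, and `a s * a (s * ρ) * a (s * ρ ^ 2) = (s ^ 3 - 1) ^ 2`. If none
of the three factors were a square, the quadratic character of the left side would be
`(-1) ^ 3 = -1`, which is not the square of an integer.
-/

theorem stmt_9 (F : Type*) [Field F] [Fintype F]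
    (hodd : Odd (Fintype.card F)) (hmod : Fintype.card F % 3 = 1) :
    ∀ s : F, ∃ t : F, t ^ 3 = s ^ 3 ∧ IsSquare (t ^ 2 + t + 1) := by
  classical
  intro s
  obtain ⟨ρ, hρ⟩ : ∃ ρ : F, ρ ^ 2 + ρ + 1 = 0 := by
    have : Fact (Nat.Prime 3) := ⟨Nat.prime_three⟩
    obtain ⟨u, hu⟩ := exists_prime_orderOf_dvd_card (G := Fˣ) 3
      (by rw [Fintype.card_units]; omega)
    have h3 : (u : F) ^ 3 = 1 := by
      rw [← Units.val_pow_eq_pow_val, ← hu, pow_orderOf_eq_one, Units.val_one]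
    have h1 : (u : F) - 1 ≠ 0 := by
      intro h
      have : u = 1 := Units.ext (by simpa using sub_eq_zero.mp h)
      simp [this] at hu
    exact ⟨u, mul_left_cancel₀ h1 (by linear_combination h3)⟩
  have h3 : ρ ^ 3 = 1 := by linear_combination (ρ - 1) * hρ
  by_contra! h
  have e0 := quadraticChar_neg_one_iff_not_isSquare.mpr (h s rfl)
  have e1 := quadraticChar_neg_one_iff_not_isSquare.mpr
    (h (s * ρ) (by linear_combination s ^ 3 * h3))
  have e2 := quadraticChar_neg_one_iff_not_isSquare.mpr
    (h (s * ρ ^ 2) (by linear_combination s ^ 3 * (ρ ^ 3 + 1) * h3))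
  have key : (s ^ 2 + s + 1) * ((s * ρ) ^ 2 + s * ρ + 1) * ((s * ρ ^ 2) ^ 2 + s * ρ ^ 2 + 1)
      = (s ^ 3 - 1) ^ 2 := by
    -- The two factors `f1`, `f2` are conjugate; their product `f3` is `(s - 1) * (s ^ 3 - 1)`.
    have hρ2 : ρ ^ 2 = -ρ - 1 := by linear_combination hρ
    have f1 : (s * ρ) ^ 2 + s * ρ + 1 = s ^ 2 * (-ρ - 1) + s * ρ + 1 := by
      rw [mul_pow, hρ2]
    have f2 : (s * ρ ^ 2) ^ 2 + s * ρ ^ 2 + 1 = s ^ 2 * ρ + s * (-ρ - 1) + 1 := by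
      linear_combination s ^ 2 * ρ * h3 + s * hρ2
    have f3 : (s ^ 2 * (-ρ - 1) + s * ρ + 1) * (s ^ 2 * ρ + s * (-ρ - 1) + 1)
        = s ^ 4 - s ^ 3 - s + 1 := by
      linear_combination (-s ^ 4 + 2 * s ^ 3 - s ^ 2) * hρ
    rw [mul_assoc, f1, f2, f3]
    ring
  have hχ := congrArg (quadraticChar F) key
  rw [map_mul, map_mul, map_pow, e0, e1, e2] at hχ
  nlinarith [sq_nonneg (quadraticChar F (s ^ 3 - 1))]
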